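/- (Theorem 4.) In a discrete causal Bayesian network in which every conditional probability table follows the linear edge-flow model, if the edge-unfairness weight w_{A→X} equals zero for every unfair edge A→X emanating from the sensitive set S, then the cumulative unfairness vanishes: for every non-sensitive target variable Y, every value y of Y, and every assignment s of values to S, C_{S=s, Y=y} = (1/N) · ∑_{s' ≠ s} ( P(Y=y | do(S=s)) − P(Y=y | do(S=s')) ) = 0, where N ≥ 1 is the number of assignments to S distinct from s. -/

import Mathlib

open scoped Classical

/-- The interventional probability `P(Y = y | do(S = s))` given by the truncated
factorization: the sum over all full assignments `v` with `v|_S = s` and `v Y = y` of the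
product over variables `i ∉ S` of `c i (v|_{Pa i}) (v i)`. -/
noncomputable def doProb {n : ℕ} (α : Fin n → Type) [∀ i, Fintype (α i)]
    (Pa : Fin n → Finset (Fin n))
    (c : ∀ i : Fin n, (∀ j, j ∈ Pa i → α j) → α i → ℝ)
    (S : Finset (Fin n)) (s : ∀ j, j ∈ S → α j)
    (Y : Fin n) (y : α Y) : ℝ :=
  ∑ v : ∀ j : Fin n, α j,
    if (∀ j (h : j ∈ S), v j = s j h) ∧ v Y = y
    then ∏ i ∈ Sᶜ, c i (fun j _ => v j) (v i) else 0

section EdgeFlow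

variable {ι : Type*} [DecidableEq ι] {α : ι → Type*}

theorem dependsOn_compl_of_edgeUnfairness_eq_zero {β R : Type*} [NonUnitalNonAssocSemiring R]
    {P S : Finset ι} {c : (∀ j, j ∈ P → α j) → β → R} {wF : R} {wU : ι → R}
    {pF : (∀ j, j ∈ P \ S → α j) → β → R} {pU : ∀ A, α A → β → R}
    (hmodel : ∀ pa x, c pa x =
      wF * pF (fun j hj ↦ pa j (Finset.mem_sdiff.mp hj).1) x +
        ∑ A ∈ (P ∩ S).attach, wU A.1 * pU A.1 (pa A.1 (Finset.mem_inter.mp A.2).1) x)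
    (hzero : ∀ A ∈ P ∩ S, wU A = 0) :
    DependsOn (fun v : ∀ j, α j ↦ c fun j _ ↦ v j) (S : Set ι)ᶜ := by
  have fair_only (pa : ∀ j, j ∈ P → α j) (x : β) :
      c pa x = wF * pF (fun j hj ↦ pa j (Finset.mem_sdiff.mp hj).1) x := by
    rw [hmodel, Finset.sum_eq_zero fun A _ ↦ by rw [hzero A A.2, zero_mul], add_zero]
  intro v w hvw
  have fair_eq : (fun j (_ : j ∈ P \ S) ↦ v j) = fun j _ ↦ w j :=
    funext₂ fun j hj ↦ hvw j (Finset.mem_sdiff.mp hj).2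
  funext x
  simp only [fair_only, fair_eq]

end EdgeFlow

section Dependence

variable {ι : Type*} {α : ι → Type*}

theorem dependsOn_finset_prod {κ M : Type*} [CommMonoid M] {t : Finset κ} {T : Set ι}
    {f : κ → (∀ i, α i) → M} (hf : ∀ k ∈ t, DependsOn (f k) T) :
    DependsOn (fun v ↦ ∏ k ∈ t, f k v) T :=
  fun _ _ hvw ↦ Finset.prod_congr rfl fun k hk ↦ hf k hk hvw

theorem dependsOn_prod_conditional {M : Type*} [CommMonoid M] {Pa : ι → Finset ι}
    {c : ∀ i, (∀ j, j ∈ Pa i → α j) → α i → M} {t : Finset ι} {T : Set ι} (htT : (t : Set ι) ⊆ T)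
    (hc : ∀ i ∈ t, DependsOn (fun v : ∀ j, α j ↦ c i fun j _ ↦ v j) T) :
    DependsOn (fun v : ∀ j, α j ↦ ∏ i ∈ t, c i (fun j _ ↦ v j) (v i)) T := by
  refine dependsOn_finset_prod fun i hi v w hvw ↦ ?_
  rw [hvw i (htT hi)]
  exact congrFun (hc i hi hvw) (w i)

theorem sum_filter_restrict_eq_of_dependsOn_compl [Fintype (∀ i, α i)] {M : Type*}
    [AddCommMonoid M] {S : Finset ι} {f : (∀ i, α i) → M} (hf : DependsOn f (S : Set ι)ᶜ)
    (s s' : ∀ i : S, α i) :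
    ∑ v with S.restrict v = s, f v = ∑ v with S.restrict v = s', f v := by
  -- Overwriting the coordinates in `S` is a bijection between the two fibers that `f` cannot see.
  refine Finset.sum_bij' (fun v _ ↦ Function.updateFinset v S s')
    (fun v _ ↦ Function.updateFinset v S s) ?mapsTo ?mapsTo' ?leftInv ?rightInv ?agree
  case mapsTo | mapsTo' => simp [Function.restrict_updateFinset]
  case leftInv | rightInv =>
    intro v hv
    obtain rfl := (Finset.mem_filter.mp hv).2
    rw [Function.updateFinset_updateFinset_of_subset subset_rfl, Function.updateFinset_restrict]
  case agree => exact fun v _ ↦ hf fun i (hi : i ∉ S) ↦ by simp [Function.updateFinset, hi]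

end Dependence

section Intervention

variable {n : ℕ} {α : Fin n → Type} [∀ i, Fintype (α i)] {Pa : Fin n → Finset (Fin n)}
  {c : ∀ i : Fin n, (∀ j, j ∈ Pa i → α j) → α i → ℝ} {S : Finset (Fin n)}

theorem doProb_eq_sum_filter_restrict (s : ∀ j, j ∈ S → α j) (Y : Fin n) (y : α Y) :
    doProb α Pa c S s Y y =
      ∑ v with S.restrict v = fun j : S ↦ s j.1 j.2,
        if v Y = y then ∏ i ∈ Sᶜ, c i (fun j _ ↦ v j) (v i) else 0 := by
  simp only [doProb, Finset.sum_filter, ite_and, funext_iff, Subtype.forall, Finset.restrict]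

theorem zero_edge_unfairness_cumulative_unfairness_vanishes_general
    (hc : ∀ i ∉ S, DependsOn (fun v : ∀ j, α j ↦ c i fun j _ ↦ v j) (S : Set (Fin n))ᶜ)
    {Y : Fin n} (hY : Y ∉ S) (y : α Y) (s s' : ∀ j, j ∈ S → α j) :
    doProb α Pa c S s Y y = doProb α Pa c S s' Y y := by
  have factorization_dependsOn := dependsOn_prod_conditional (Finset.coe_compl S).subset
    fun i hi ↦ hc i (Finset.mem_compl.mp hi)
  simp only [doProb_eq_sum_filter_restrict]
  refine sum_filter_restrict_eq_of_dependsOn_compl (fun v w hvw ↦ ?_) _ _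
  exact if_congr (by rw [hvw Y hY]) (factorization_dependsOn hvw) rfl

end Intervention

/-- Theorem 4: In a discrete causal Bayesian network in which every CPT
follows the linear edge-flow model (unfair parents `U_X = Pa X ∩ S`, fair parents
`F_X = Pa X \ S`, `c X pa x = w_F(X) · p_F X (pa|_{F_X}) x + ∑_{A ∈ U_X} w_{A→X} ·
p_U X A (pa A) x` with pmf edge flows and weights in `[0,1]` summing to `1`), if the
edge-unfairness weight `w_{A→X}` is zero for every unfair edge `A→X` emanating from the
sensitive set `S`, then the cumulative unfairness vanishes: for every non-sensitive `Y`,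
value `y` and assignment `s` to `S`,
`C_{S=s,Y=y} = (1/N) · ∑_{s' ≠ s} (P(Y=y | do(S=s)) − P(Y=y | do(S=s'))) = 0`,
where `N ≥ 1` is the number of assignments to `S` distinct from `s` (it is assumed `S`
has at least two distinct assignments). -/
theorem zero_edge_unfairness_cumulative_unfairness_vanishes
    {n : ℕ} (α : Fin n → Type) [∀ i, Fintype (α i)] [∀ i, Nonempty (α i)]
    (Pa : Fin n → Finset (Fin n))
    (hPa : ∀ i : Fin n, ∀ j ∈ Pa i, j < i)
    (c : ∀ i : Fin n, (∀ j, j ∈ Pa i → α j) → α i → ℝ)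
    (hc_nonneg : ∀ (i : Fin n) (pa : ∀ j, j ∈ Pa i → α j) (x : α i), 0 ≤ c i pa x)
    (hc_sum : ∀ (i : Fin n) (pa : ∀ j, j ∈ Pa i → α j), ∑ x : α i, c i pa x = 1)
    (S : Finset (Fin n))
    -- linear edge-flow model data: weights and edge flows
    (wF : Fin n → ℝ) (wU : Fin n → Fin n → ℝ)
    (pF : ∀ X : Fin n, (∀ j, j ∈ Pa X \ S → α j) → α X → ℝ)
    (pU : ∀ X A : Fin n, α A → α X → ℝ)
    (hpF_nonneg : ∀ (X : Fin n) (paf : ∀ j, j ∈ Pa X \ S → α j) (x : α X), 0 ≤ pF X paf x)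
    (hpF_sum : ∀ (X : Fin n) (paf : ∀ j, j ∈ Pa X \ S → α j), ∑ x : α X, pF X paf x = 1)
    (hpU_nonneg : ∀ (X A : Fin n) (a : α A) (x : α X), 0 ≤ pU X A a x)
    (hpU_sum : ∀ (X A : Fin n) (a : α A), ∑ x : α X, pU X A a x = 1)
    (hwF : ∀ X : Fin n, 0 ≤ wF X ∧ wF X ≤ 1)
    (hwU : ∀ X : Fin n, ∀ A ∈ Pa X ∩ S, 0 ≤ wU X A ∧ wU X A ≤ 1)
    (hw_sum : ∀ X : Fin n, wF X + ∑ A ∈ (Pa X ∩ S).attach, wU X A.1 = 1)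
    -- every CPT follows the linear edge-flow model
    (hmodel : ∀ (X : Fin n) (pa : ∀ j, j ∈ Pa X → α j) (x : α X),
      c X pa x =
        wF X * pF X (fun j hj => pa j (Finset.mem_sdiff.mp hj).1) x +
          ∑ A ∈ (Pa X ∩ S).attach,
            wU X A.1 * pU X A.1 (pa A.1 (Finset.mem_inter.mp A.2).1) x)
    -- the edge-unfairness weight vanishes on every unfair edge emanating from S
    (hzero : ∀ X : Fin n, ∀ A ∈ Pa X ∩ S, wU X A = 0)
    (Y : Fin n) (hY : Y ∉ S) (y : α Y)
    (s : ∀ j, j ∈ S → α j)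
    -- `S` has at least two distinct assignments, i.e. `N ≥ 1`
    (hN : 1 ≤ (Finset.univ.filter
      (fun s' : ∀ j, j ∈ S → α j => s' ≠ s)).card) :
    (1 / ((Finset.univ.filter
        (fun s' : ∀ j, j ∈ S → α j => s' ≠ s)).card : ℝ)) *
      ∑ s' ∈ Finset.univ.filter (fun s' : ∀ j, j ∈ S → α j => s' ≠ s),
        (doProb α Pa c S s Y y - doProb α Pa c S s' Y y) = 0 := by
  have total_effect_eq_zero (s' : ∀ j, j ∈ S → α j) :
      doProb α Pa c S s Y y - doProb α Pa c S s' Y y = 0 :=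
    sub_eq_zero.mpr <| zero_edge_unfairness_cumulative_unfairness_vanishes_general
      (fun X _ ↦ dependsOn_compl_of_edgeUnfairness_eq_zero (hmodel X) (hzero X)) hY y s s'
  rw [Finset.sum_eq_zero fun s' _ ↦ total_effect_eq_zero s', mul_zero]
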